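/- Let n ≥ 1 be an integer and let a be a measurable map from ℝⁿ to the symmetric n×n real matrices such that λ‖ξ‖² ≤ ⟨a(x)ξ, ξ⟩ ≤ Λ‖ξ‖² for all x, ξ ∈ ℝⁿ, where 0 < λ ≤ Λ, and additionally λ₀‖ξ‖² ≤ ⟨a(x)ξ, ξ⟩ ≤ Λ₀‖ξ‖² for all ξ and all x with ‖x‖ ≥ r₀, where λ ≤ λ₀ ≤ Λ₀ ≤ Λ and r₀ ≥ 0. Then for every r > r₀ and every ε > 0 there exist a smooth map b from ℝⁿ to the symmetric n×n real matrices and a measurable set 𝒜 ⊆ B(r) with Lebesgue measure at most ε such that: λ‖ξ‖² ≤ ⟨b(x)ξ, ξ⟩ ≤ Λ‖ξ‖² for all ξ and all x ∈ B(r); ‖a(x) − b(x)‖ < ε for all x ∈ B(r) \ 𝒜; and λ₀‖ξ‖² ≤ ⟨b(x)ξ, ξ⟩ ≤ Λ₀‖ξ‖² for all ξ and all x ∈ B(r) \ B(r₀). -/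

import Mathlib

open MeasureTheory Matrix

noncomputable section

/-- The squared Euclidean norm of a vector in `Fin n → ℝ`. -/
def sqnorm {n : ℕ} (ξ : Fin n → ℝ) : ℝ := ∑ i, ξ i ^ 2

/-- The Euclidean norm of a vector in `Fin n → ℝ`. -/
def enorm' {n : ℕ} (x : Fin n → ℝ) : ℝ := Real.sqrt (sqnorm x)

/-- The open Euclidean ball of radius `r` centered at the origin of `ℝⁿ`. -/
def eball (n : ℕ) (r : ℝ) : Set (Fin n → ℝ) := {x | enorm' x < r}

open scoped Matrix.Norms.L2Operator Convolution Topology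

/-- Convolving with a normalized bump function preserves membership in a closed convex set. -/
lemma ContDiffBump.normed_convolution_mem {E F : Type*} [NormedAddCommGroup E] [NormedSpace ℝ E]
    [FiniteDimensional ℝ E] [MeasurableSpace E] [BorelSpace E] {μ : Measure E}
    [μ.IsAddHaarMeasure] [NormedAddCommGroup F] [NormedSpace ℝ F] [CompleteSpace F]
    (φ : ContDiffBump (0 : E)) {K : Set F} (hconv : Convex ℝ K) (hclosed : IsClosed K)
    {f : E → F} (hf : LocallyIntegrable f μ) (hfK : ∀ x, f x ∈ K) (x : E) :
    (φ.normed μ ⋆[ContinuousLinearMap.lsmul ℝ ℝ, μ] f) x ∈ K := by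
  have hφm : Measurable fun t => (φ.normed μ t).toNNReal :=
    φ.continuous_normed.measurable.real_toNNReal
  have hcoe : ∀ t, ((φ.normed μ t).toNNReal : ℝ) = φ.normed μ t :=
    fun t => Real.coe_toNNReal _ (φ.nonneg_normed t)
  have hprob : IsProbabilityMeasure
      (μ.withDensity fun t => ((φ.normed μ t).toNNReal : ENNReal)) := by
    refine ⟨?_⟩
    rw [withDensity_apply _ MeasurableSet.univ, Measure.restrict_univ]
    change ∫⁻ t, ENNReal.ofReal (φ.normed μ t) ∂μ = 1
    rw [← ofReal_integral_eq_lintegral_ofReal φ.integrable_normed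
      (ae_of_all _ φ.nonneg_normed), φ.integral_normed, ENNReal.ofReal_one]
  have hint : Integrable (fun t => f (x - t))
      (μ.withDensity fun t => ((φ.normed μ t).toNNReal : ENNReal)) := by
    rw [integrable_withDensity_iff_integrable_smul hφm]
    have h : ConvolutionExistsAt (φ.normed μ) f x (ContinuousLinearMap.lsmul ℝ ℝ) μ :=
      HasCompactSupport.convolutionExists_left (ContinuousLinearMap.lsmul ℝ ℝ)
        φ.hasCompactSupport_normed φ.continuous_normed hf x
    refine Integrable.congr h (ae_of_all _ fun t => ?_)
    simp [NNReal.smul_def, hcoe]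
  have hmem := hconv.integral_mem hclosed (ae_of_all _ fun t => hfK (x - t)) hint
  rw [integral_withDensity_eq_integral_smul hφm] at hmem
  simpa [convolution_def, NNReal.smul_def, hcoe] using hmem

/-- A locally integrable map with values in a closed convex set is, off a subset of small measure
of a given set of finite measure, uniformly close to a smooth map with values in that set. -/
lemma MeasureTheory.LocallyIntegrable.exists_contDiff_mem_norm_sub_lt
    {E F : Type*} [NormedAddCommGroup E]
    [NormedSpace ℝ E] [FiniteDimensional ℝ E] [MeasurableSpace E] [BorelSpace E] {μ : Measure E}
    [μ.IsAddHaarMeasure] [NormedAddCommGroup F] [NormedSpace ℝ F] [CompleteSpace F]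
    {K : Set F} (hconv : Convex ℝ K) (hclosed : IsClosed K)
    {f : E → F} (hf : LocallyIntegrable f μ) (hfK : ∀ x, f x ∈ K)
    {B : Set E} (hB : MeasurableSet B) (hμB : μ B ≠ ⊤)
    {ε : ℝ} (hε : 0 < ε) {δ : ENNReal} (hδ : 0 < δ) :
    ∃ (g : E → F) (N : Set E), ContDiff ℝ (⊤ : ℕ∞) g ∧ (∀ x, g x ∈ K) ∧ MeasurableSet N ∧
      μ N ≤ δ ∧ ∀ x ∈ B \ N, ‖f x - g x‖ < ε := by
  let φ : ℕ → ContDiffBump (0 : E) := fun k =>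
    { rIn := 1 / ((k : ℝ) + 1)
      rOut := 2 * (1 / ((k : ℝ) + 1))
      rIn_pos := by positivity
      rIn_lt_rOut := by
        have : 0 < 1 / ((k : ℝ) + 1) := by positivity
        linarith }
  let g : ℕ → E → F := fun k => (φ k).normed μ ⋆[ContinuousLinearMap.lsmul ℝ ℝ, μ] f
  have hsmooth : ∀ k, ContDiff ℝ (⊤ : ℕ∞) (g k) := fun k =>
    (φ k).hasCompactSupport_normed.contDiff_convolution_left _ (φ k).contDiff_normed hf
  have hlim : ∀ᵐ x ∂μ, Filter.Tendsto (fun k => g k x) Filter.atTop (𝓝 (f x)) := by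
    refine ContDiffBump.ae_convolution_tendsto_right_of_locallyIntegrable (K := 2) ?_ ?_ hf
    · simpa [φ] using (tendsto_one_div_add_atTop_nhds_zero_nat (𝕜 := ℝ)).const_mul 2
    · exact Filter.Eventually.of_forall fun k => le_rfl
  have : IsFiniteMeasure (μ.restrict B) := ⟨by simpa using hμB.lt_top⟩
  have hmeas := tendstoInMeasure_of_tendsto_ae (μ := μ.restrict B)
    (fun k => (hsmooth k).continuous.aestronglyMeasurable) (ae_restrict_of_ae hlim)
    (ENNReal.ofReal ε) (ENNReal.ofReal_pos.2 hε)
  obtain ⟨k, hk⟩ := (hmeas.eventually (gt_mem_nhds hδ)).exists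
  refine ⟨g k, toMeasurable μ ({x | ENNReal.ofReal ε ≤ edist (g k x) (f x)} ∩ B), hsmooth k,
    fun x => (φ k).normed_convolution_mem hconv hclosed hf hfK x, measurableSet_toMeasurable _ _,
    ?_, fun x hx => ?_⟩
  · rw [measure_toMeasurable, ← Measure.restrict_apply' hB]
    exact hk.le
  · by_contra hlt
    refine hx.2 (subset_toMeasurable _ _ ⟨?_, hx.1⟩)
    rw [not_lt, ← dist_eq_norm, dist_comm] at hlt
    rw [Set.mem_ofPred_eq, edist_dist]
    exact ENNReal.ofReal_le_ofReal hlt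

/-- The symmetric matrices whose quadratic form lies between `l` and `L` times the squared norm. -/
def ellipticMatrices (n : ℕ) (l L : ℝ) : Set (Matrix (Fin n) (Fin n) ℝ) :=
  {A | A.IsSymm ∧ ∀ ξ, l * sqnorm ξ ≤ ξ ⬝ᵥ A.mulVec ξ ∧ ξ ⬝ᵥ A.mulVec ξ ≤ L * sqnorm ξ}

lemma sqnorm_nonneg {n : ℕ} (ξ : Fin n → ℝ) : 0 ≤ sqnorm ξ :=
  Finset.sum_nonneg fun _ _ => sq_nonneg _

lemma contDiff_sqnorm {n : ℕ} {m : WithTop ℕ∞} :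
    ContDiff ℝ m (sqnorm : (Fin n → ℝ) → ℝ) := by
  unfold sqnorm
  fun_prop

lemma convex_ellipticMatrices (n : ℕ) (l L : ℝ) : Convex ℝ (ellipticMatrices n l L) := by
  rintro A ⟨hA, hqA⟩ B ⟨hB, hqB⟩ s t hs ht hst
  refine ⟨(hA.smul s).add (hB.smul t), fun ξ => ?_⟩
  have hform : ξ ⬝ᵥ (s • A + t • B).mulVec ξ = s * (ξ ⬝ᵥ A.mulVec ξ) + t * (ξ ⬝ᵥ B.mulVec ξ) := by
    simp [add_mulVec, smul_mulVec, dotProduct_add]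
  obtain rfl : t = 1 - s := by linarith
  rw [hform]
  constructor
  · nlinarith [mul_le_mul_of_nonneg_left (hqA ξ).1 hs, mul_le_mul_of_nonneg_left (hqB ξ).1 ht]
  · nlinarith [mul_le_mul_of_nonneg_left (hqA ξ).2 hs, mul_le_mul_of_nonneg_left (hqB ξ).2 ht]

lemma isClosed_ellipticMatrices (n : ℕ) (l L : ℝ) : IsClosed (ellipticMatrices n l L) := by
  have hq : ∀ ξ : Fin n → ℝ, Continuous fun A : Matrix (Fin n) (Fin n) ℝ => ξ ⬝ᵥ A.mulVec ξ := by
    intro ξ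
    fun_prop
  simp only [ellipticMatrices, Set.ofPred_and, Set.ofPred_forall]
  refine IsClosed.inter (isClosed_eq (by fun_prop) (by fun_prop)) (isClosed_iInter fun ξ => ?_)
  exact (isClosed_le continuous_const (hq ξ)).inter (isClosed_le (hq ξ) continuous_const)

lemma ellipticMatrices_mono {n : ℕ} {l l' L L' : ℝ} (hl : l' ≤ l) (hL : L ≤ L') :
    ellipticMatrices n l L ⊆ ellipticMatrices n l' L' := fun _ hA =>
  ⟨hA.1, fun ξ =>
    ⟨(mul_le_mul_of_nonneg_right hl (sqnorm_nonneg ξ)).trans (hA.2 ξ).1,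
      (hA.2 ξ).2.trans (mul_le_mul_of_nonneg_right hL (sqnorm_nonneg ξ))⟩⟩

lemma smul_one_mem_ellipticMatrices {n : ℕ} {l L : ℝ} (h : l ≤ L) :
    l • (1 : Matrix (Fin n) (Fin n) ℝ) ∈ ellipticMatrices n l L := by
  refine ⟨isSymm_one.smul l, fun ξ => ?_⟩
  have hform : ξ ⬝ᵥ (l • (1 : Matrix (Fin n) (Fin n) ℝ)).mulVec ξ = l * sqnorm ξ := by
    simp [smul_mulVec, sqnorm, dotProduct, pow_two, Finset.mul_sum, mul_left_comm]
  rw [hform]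
  exact ⟨le_rfl, mul_le_mul_of_nonneg_right h (sqnorm_nonneg ξ)⟩

lemma sqnorm_single {n : ℕ} (i : Fin n) : sqnorm (Pi.single i (1 : ℝ)) = 1 := by
  simp [sqnorm, Pi.single_apply]

lemma sqnorm_add_add_sqnorm_sub {n : ℕ} (x y : Fin n → ℝ) :
    sqnorm (x + y) + sqnorm (x - y) = 2 * sqnorm x + 2 * sqnorm y := by
  simp only [sqnorm, Finset.mul_sum, ← Finset.sum_add_distrib, Pi.add_apply, Pi.sub_apply]
  exact Finset.sum_congr rfl fun _ _ => by ring

lemma abs_apply_le_of_mem_ellipticMatrices {n : ℕ} {l L : ℝ} (hl : 0 ≤ l) (hlL : l ≤ L)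
    {A : Matrix (Fin n) (Fin n) ℝ} (hA : A ∈ ellipticMatrices n l L) (i j : Fin n) :
    |A i j| ≤ L := by
  set x : Fin n → ℝ := Pi.single i 1 with hx
  set y : Fin n → ℝ := Pi.single j 1 with hy
  have hxy : x ⬝ᵥ A.mulVec y = A i j := by simp [hx, hy]
  have hyx : y ⬝ᵥ A.mulVec x = A i j := by simp [hx, hy, hA.1.apply]
  have hpol : 4 * A i j =
      (x + y) ⬝ᵥ A.mulVec (x + y) - (x - y) ⬝ᵥ A.mulVec (x - y) := by
    simp only [mulVec_add, mulVec_sub, dotProduct_add, dotProduct_sub, add_dotProduct,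
      sub_dotProduct, hxy, hyx]
    ring
  have hsum := sqnorm_add_add_sqnorm_sub x y
  rw [hx, hy, sqnorm_single, sqnorm_single, ← hx, ← hy] at hsum
  have hp := sqnorm_nonneg (x + y)
  have hm := sqnorm_nonneg (x - y)
  obtain ⟨hp₁, hp₂⟩ := hA.2 (x + y)
  obtain ⟨hm₁, hm₂⟩ := hA.2 (x - y)
  rw [abs_le]
  constructor <;> nlinarith [mul_nonneg hl hp, mul_nonneg hl hm]

lemma locallyIntegrable_of_mem_ellipticMatrices {n : ℕ} {l L : ℝ} (hl : 0 ≤ l) (hlL : l ≤ L)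
    {a : (Fin n → ℝ) → Matrix (Fin n) (Fin n) ℝ} (hmeas : ∀ i j, Measurable fun x => a x i j)
    (ha : ∀ x, a x ∈ ellipticMatrices n l L) : LocallyIntegrable a := by
  have hentry : ∀ i j, LocallyIntegrable fun x => a x i j := fun i j =>
    (locallyIntegrable_const L).mono (hmeas i j).aestronglyMeasurable <| ae_of_all _ fun x =>
      (abs_apply_le_of_mem_ellipticMatrices hl hlL (ha x) i j).trans (le_abs_self L)
  have hsum : a = fun x => ∑ i, ∑ j, a x i j • single i j (1 : ℝ) := by
    funext x
    simpa [smul_single] using matrix_eq_sum_single (a x)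
  rw [hsum]
  refine locallyIntegrable_finsetSum _ fun i _ => locallyIntegrable_finsetSum _ fun j _ => ?_
  intro x
  obtain ⟨s, hs, hint⟩ := hentry i j x
  exact ⟨s, hs, Integrable.smul_const hint _⟩

lemma contDiff_entry {n : ℕ} {E : Type*} [NormedAddCommGroup E] [NormedSpace ℝ E]
    {m : WithTop ℕ∞} {b : E → Matrix (Fin n) (Fin n) ℝ} (hb : ContDiff ℝ m b) (i j : Fin n) :
    ContDiff ℝ m fun x => b x i j :=
  (LinearMap.toContinuousLinearMap (entryLinearMap ℝ ℝ i j)).contDiff.comp hb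

lemma enorm'_lt_iff {n : ℕ} {r : ℝ} (hr : 0 ≤ r) (x : Fin n → ℝ) :
    enorm' x < r ↔ sqnorm x < r ^ 2 :=
  Real.sqrt_lt (sqnorm_nonneg x) hr

lemma measurableSet_euclidean_eball (n : ℕ) (r : ℝ) : MeasurableSet (eball n r) :=
  measurableSet_lt (contDiff_sqnorm (m := 0)).continuous.sqrt.measurable measurable_const

lemma volume_eball_ne_top (n : ℕ) (r : ℝ) : volume (eball n r) ≠ ⊤ := by
  refine ne_top_of_le_ne_top
    (measure_closedBall_lt_top (x := (0 : Fin n → ℝ)) (r := |r|)).ne (measure_mono fun x hx => ?_)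
  rw [mem_closedBall_zero_iff, pi_norm_le_iff_of_nonneg (abs_nonneg r)]
  intro i
  have hi : x i ^ 2 ≤ sqnorm x :=
    Finset.single_le_sum (f := fun i => x i ^ 2) (fun _ _ => sq_nonneg _) (Finset.mem_univ i)
  exact (Real.abs_le_sqrt hi).trans ((le_of_lt hx).trans (le_abs_self r))

/-- Thin inner neighbourhoods of the sphere of radius `r`, excluding the sphere, have small
measure. -/
lemma exists_volume_shell_le (n : ℕ) {r : ℝ} (hr : 0 ≤ r) {δ : ENNReal} (hδ : 0 < δ) :
    ∃ s < r ^ 2, volume {x : Fin n → ℝ | s < sqnorm x ∧ sqnorm x < r ^ 2} ≤ δ := by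
  have hsq : Measurable (sqnorm : (Fin n → ℝ) → ℝ) :=
    (contDiff_sqnorm (m := 0)).continuous.measurable
  let S : ℕ → Set (Fin n → ℝ) := fun k =>
    {x | r ^ 2 - 1 / ((k : ℝ) + 1) < sqnorm x ∧ sqnorm x < r ^ 2}
  have hanti : Antitone S := fun k m hkm x hx =>
    ⟨lt_of_le_of_lt (sub_le_sub_left (Nat.one_div_le_one_div hkm) _) hx.1, hx.2⟩
  have hempty : ⋂ k, S k = ∅ := by
    refine Set.eq_empty_of_forall_notMem fun x hx => ?_
    rw [Set.mem_iInter] at hx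
    obtain ⟨k, hk⟩ := exists_nat_one_div_lt (sub_pos.2 (hx 0).2)
    linarith [(hx k).1]
  have hlim := tendsto_measure_iInter_atTop (μ := volume) (s := S)
    (fun k => ((measurableSet_lt measurable_const hsq).inter
      (measurableSet_lt hsq measurable_const)).nullMeasurableSet) hanti
    ⟨0, ne_top_of_le_ne_top (volume_eball_ne_top n r)
      (measure_mono fun x hx => (enorm'_lt_iff hr x).2 hx.2)⟩
  rw [hempty, measure_empty] at hlim
  obtain ⟨k, hk⟩ := (hlim.eventually (gt_mem_nhds hδ)).exists
  exact ⟨_, sub_lt_self _ Nat.one_div_pos_of_nat, hk.le⟩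

/-- **Smooth approximation of measurable elliptic coefficients.** Given a measurable
symmetric uniformly elliptic matrix-valued map `a` with ellipticity bounds `λ ≤ Λ`
everywhere and bounds `λ₀ ≤ Λ₀` outside the ball of radius `r₀`, for every `r > r₀`
and `ε > 0` there exist a smooth symmetric matrix-valued map `b` and a measurable set
`𝒜 ⊆ B(r)` of measure at most `ε` such that `b` satisfies the bounds `λ ≤ Λ` on `B(r)`,
agrees with `a` up to `ε` in operator norm on `B(r) \ 𝒜`, and satisfies the bounds
`λ₀ ≤ Λ₀` on `B(r) \ B(r₀)`. -/
theorem smooth_approximation_elliptic_coefficients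
    (n : ℕ) (hn : 1 ≤ n)
    (a : (Fin n → ℝ) → Matrix (Fin n) (Fin n) ℝ)
    (hameas : ∀ i j, Measurable fun x => a x i j)
    (hasymm : ∀ x, (a x).IsSymm)
    (lam lam₀ Lam₀ Lam : ℝ) (hlam : 0 < lam) (h₁ : lam ≤ lam₀) (h₂ : lam₀ ≤ Lam₀)
    (h₃ : Lam₀ ≤ Lam)
    (r₀ : ℝ) (hr₀ : 0 ≤ r₀)
    (hell : ∀ x ξ, lam * sqnorm ξ ≤ ξ ⬝ᵥ (a x).mulVec ξ ∧
      ξ ⬝ᵥ (a x).mulVec ξ ≤ Lam * sqnorm ξ)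
    (hell₀ : ∀ x, r₀ ≤ enorm' x → ∀ ξ, lam₀ * sqnorm ξ ≤ ξ ⬝ᵥ (a x).mulVec ξ ∧
      ξ ⬝ᵥ (a x).mulVec ξ ≤ Lam₀ * sqnorm ξ)
    (r : ℝ) (hr : r₀ < r) (ε : ℝ) (hε : 0 < ε) :
    ∃ b : (Fin n → ℝ) → Matrix (Fin n) (Fin n) ℝ, ∃ 𝒜 : Set (Fin n → ℝ),
      (∀ i j, ContDiff ℝ (⊤ : ℕ∞) fun x => b x i j) ∧
      (∀ x, (b x).IsSymm) ∧
      MeasurableSet 𝒜 ∧ 𝒜 ⊆ eball n r ∧ volume 𝒜 ≤ ENNReal.ofReal ε ∧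
      (∀ x ∈ eball n r, ∀ ξ, lam * sqnorm ξ ≤ ξ ⬝ᵥ (b x).mulVec ξ ∧
        ξ ⬝ᵥ (b x).mulVec ξ ≤ Lam * sqnorm ξ) ∧
      (∀ x ∈ eball n r \ 𝒜, ‖Matrix.toEuclideanCLM (𝕜 := ℝ) (a x - b x)‖ < ε) ∧
      (∀ x ∈ eball n r \ eball n r₀, ∀ ξ, lam₀ * sqnorm ξ ≤ ξ ⬝ᵥ (b x).mulVec ξ ∧
        ξ ⬝ᵥ (b x).mulVec ξ ≤ Lam₀ * sqnorm ξ) := by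
  have hl₀ : 0 < lam₀ := hlam.trans_le h₁
  have ha : ∀ x, a x ∈ ellipticMatrices n lam Lam := fun x => ⟨hasymm x, hell x⟩
  let a₀ : (Fin n → ℝ) → Matrix (Fin n) (Fin n) ℝ := fun x =>
    if enorm' x < r₀ then lam₀ • 1 else a x
  have ha₀ : ∀ x, a₀ x ∈ ellipticMatrices n lam₀ Lam₀ := fun x => by
    by_cases hx : enorm' x < r₀
    · simpa only [a₀, if_pos hx] using smul_one_mem_ellipticMatrices h₂
    · rw [show a₀ x = a x from if_neg hx]
      exact ⟨hasymm x, hell₀ x (not_lt.1 hx)⟩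
  have ha₀meas : ∀ i j, Measurable fun x => a₀ x i j := fun i j => by
    simp only [a₀, apply_ite (fun A : Matrix (Fin n) (Fin n) ℝ => A i j)]
    exact Measurable.ite (measurableSet_euclidean_eball n r₀) measurable_const (hameas i j)
  have hδ : 0 < ENNReal.ofReal (ε / 3) := ENNReal.ofReal_pos.2 (by positivity)
  obtain ⟨b₁, N₁, hb₁, hb₁mem, hN₁, hvol₁, hclose₁⟩ :=
    (locallyIntegrable_of_mem_ellipticMatrices hlam.le (h₁.trans (h₂.trans h₃)) hameas
      ha).exists_contDiff_mem_norm_sub_lt (convex_ellipticMatrices n lam Lam)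
      (isClosed_ellipticMatrices n lam Lam) ha (measurableSet_euclidean_eball n r)
      (volume_eball_ne_top n r) hε hδ
  obtain ⟨b₀, N₀, hb₀, hb₀mem, hN₀, hvol₀, hclose₀⟩ :=
    (locallyIntegrable_of_mem_ellipticMatrices hl₀.le h₂ ha₀meas
      ha₀).exists_contDiff_mem_norm_sub_lt (convex_ellipticMatrices n lam₀ Lam₀)
      (isClosed_ellipticMatrices n lam₀ Lam₀) ha₀ (measurableSet_euclidean_eball n r)
      (volume_eball_ne_top n r) hε hδ
  obtain ⟨s, hs, hvol⟩ := exists_volume_shell_le n hr₀ hδ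
  have hsq : Measurable (sqnorm : (Fin n → ℝ) → ℝ) :=
    (contDiff_sqnorm (m := 0)).continuous.measurable
  let S : Set (Fin n → ℝ) := {x | s < sqnorm x ∧ sqnorm x < r₀ ^ 2}
  have hSmeas : MeasurableSet S :=
    (measurableSet_lt measurable_const hsq).inter (measurableSet_lt hsq measurable_const)
  let χ : (Fin n → ℝ) → ℝ := fun x => Real.smoothTransition ((sqnorm x - s) / (r₀ ^ 2 - s))
  have hχ : ContDiff ℝ (⊤ : ℕ∞) χ :=
    Real.smoothTransition.contDiff.comp ((contDiff_sqnorm.sub contDiff_const).div_const _)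
  have hχ_inner : ∀ x, sqnorm x ≤ s → χ x = 0 := fun x hx =>
    Real.smoothTransition.zero_of_nonpos
      (div_nonpos_of_nonpos_of_nonneg (by linarith) (by linarith))
  have hχ_outer : ∀ x, r₀ ^ 2 ≤ sqnorm x → χ x = 1 := fun x hx =>
    Real.smoothTransition.one_of_one_le ((one_le_div (by linarith)).2 (by linarith))
  let b : (Fin n → ℝ) → Matrix (Fin n) (Fin n) ℝ := fun x => (1 - χ x) • b₁ x + χ x • b₀ x
  have hbmem : ∀ x, b x ∈ ellipticMatrices n lam Lam := fun x =>
    convex_ellipticMatrices n lam Lam (hb₁mem x) (ellipticMatrices_mono h₁ h₃ (hb₀mem x))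
      (sub_nonneg.2 (Real.smoothTransition.le_one _)) (Real.smoothTransition.nonneg _)
      (sub_add_cancel 1 (χ x))
  have hb_inner : ∀ x, sqnorm x ≤ s → b x = b₁ x := fun x hx => by simp [b, hχ_inner x hx]
  have hb_outer : ∀ x, r₀ ^ 2 ≤ sqnorm x → b x = b₀ x := fun x hx => by simp [b, hχ_outer x hx]
  refine ⟨b, eball n r ∩ (N₁ ∪ N₀ ∪ S), contDiff_entry
    (((contDiff_const.sub hχ).smul hb₁).add (hχ.smul hb₀)), fun x => (hbmem x).1,
    (measurableSet_euclidean_eball n r).inter ((hN₁.union hN₀).union hSmeas), Set.inter_subset_left, ?_,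
    fun x _ => (hbmem x).2, fun x hx => ?_, fun x hx => ?_⟩
  · calc volume (eball n r ∩ (N₁ ∪ N₀ ∪ S))
        ≤ volume (N₁ ∪ N₀ ∪ S) := measure_mono Set.inter_subset_right
      _ ≤ volume N₁ + volume N₀ + volume S :=
        (measure_union_le _ _).trans (add_le_add_left (measure_union_le _ _) _)
      _ ≤ ENNReal.ofReal (ε / 3) + ENNReal.ofReal (ε / 3) + ENNReal.ofReal (ε / 3) := by gcongr
      _ = ENNReal.ofReal ε := by
        rw [← ENNReal.ofReal_add (by positivity) (by positivity),
          ← ENNReal.ofReal_add (by positivity) (by positivity)]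
        ring_nf
  · rw [← cstar_norm_def]
    obtain ⟨hxr, hxN⟩ := hx
    have hx₁ : x ∉ N₁ := fun h => hxN ⟨hxr, .inl (.inl h)⟩
    have hx₀ : x ∉ N₀ := fun h => hxN ⟨hxr, .inl (.inr h)⟩
    rcases le_or_gt (sqnorm x) s with hxs | hxs
    · rw [hb_inner x hxs]
      exact hclose₁ x ⟨hxr, hx₁⟩
    · have hxr₀ : r₀ ^ 2 ≤ sqnorm x := not_lt.1 fun h => hxN ⟨hxr, .inr ⟨hxs, h⟩⟩
      have hclose := hclose₀ x ⟨hxr, hx₀⟩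
      have ha₀x : a₀ x = a x := if_neg fun h => hxr₀.not_gt ((enorm'_lt_iff hr₀ x).1 h)
      rwa [ha₀x, ← hb_outer x hxr₀] at hclose
  · rw [hb_outer x (not_lt.1 fun h => hx.2 ((enorm'_lt_iff hr₀ x).2 h))]
    exact (hb₀mem x).2

end
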